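/- arXiv:2302.13901 — 2 statements merged into one kernel-verified Lean document; each statement's English description precedes it below -/
import Mathlib

section
/- Let 0 ≤ d < 4/5. Then (1/(1-d)) ∫₀¹∫₀¹∫₀¹ u^{3-3d} v^{1-d} (1-uv)^{-d} (1-vw)^{1-2d} (1-w)^{-d} (1-uvw)^{-d} ₂F₁(1,d;2-d; u(1-vw)/(1-uvw)) dw dv du = [Γ(1-d)Γ(2-d)Γ(4-5d) / ((1-d)² Γ(3-2d) Γ(5-5d))] · ₃F₂(1, d, 2-2d; 2-d, 3-2d; 1) − [Γ(1-d)Γ(3-3d)Γ(4-5d) / (2(1-d)² Γ(4-4d) Γ(5-5d))] · ₄F₃(1, d, 2-2d, 3-3d; 2-d, 3-2d, 4-4d; 1). -/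
open Real MeasureTheory

/-- Pochhammer symbol `(a)_k = a (a+1) ⋯ (a+k-1)` for real `a`. -/
noncomputable def poch (a : ℝ) (k : ℕ) : ℝ := (ascPochhammer ℝ k).eval a

/-- Gaussian hypergeometric function `₂F₁(a,b;c;z)`. -/
noncomputable def hyp2F1 (a b c z : ℝ) : ℝ :=
  ∑' k : ℕ, (poch a k * poch b k) / poch c k * z ^ k / (Nat.factorial k)

/-- Generalized hypergeometric function `₃F₂(a₁,a₂,a₃;b₁,b₂;z)`. -/
noncomputable def hyp3F2 (a₁ a₂ a₃ b₁ b₂ z : ℝ) : ℝ :=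
  ∑' k : ℕ, (poch a₁ k * poch a₂ k * poch a₃ k) / (poch b₁ k * poch b₂ k) * z ^ k /
    (Nat.factorial k)

/-- Generalized hypergeometric function `₄F₃(a₁,a₂,a₃,a₄;b₁,b₂,b₃;z)`. -/
noncomputable def hyp4F3 (a₁ a₂ a₃ a₄ b₁ b₂ b₃ z : ℝ) : ℝ :=
  ∑' k : ℕ, (poch a₁ k * poch a₂ k * poch a₃ k * poch a₄ k) /
    (poch b₁ k * poch b₂ k * poch b₃ k) * z ^ k / (Nat.factorial k)


noncomputable def EE (a x : ℝ) : ENNReal := if 0 < x then ENNReal.ofReal (x ^ a) else 0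

lemma EE_pos {a x : ℝ} (h : 0 < x) : EE a x = ENNReal.ofReal (x ^ a) := if_pos h

lemma EE_np {a x : ℝ} (h : x ≤ 0) : EE a x = 0 := if_neg (not_lt.mpr h)

@[fun_prop]
lemma measurable_EE (a : ℝ) : Measurable (EE a) := by
  unfold EE
  exact Measurable.ite measurableSet_Ioi (by fun_prop) (by fun_prop)

@[fun_prop]
lemma measurable_EE_comp {α : Type*} [MeasurableSpace α] (a : ℝ) {f : α → ℝ} (hf : Measurable f) :
    Measurable (fun x => EE a (f x)) := (measurable_EE a).comp hf

lemma EE_mul_arg {a c : ℝ} (hc : 0 < c) (x : ℝ) : EE a (c * x) = EE a c * EE a x := by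
  rcases lt_or_ge 0 x with h | h
  · rw [EE_pos h, EE_pos hc, EE_pos (mul_pos hc h), Real.mul_rpow hc.le h.le,
      ENNReal.ofReal_mul (by positivity)]
  · rw [EE_np h, EE_np (mul_nonpos_of_nonneg_of_nonpos hc.le h), mul_zero]

lemma EE_mul (a b x : ℝ) : EE a x * EE b x = EE (a + b) x := by
  rcases lt_or_ge 0 x with h | h
  · rw [EE_pos h, EE_pos h, EE_pos h, Real.rpow_add h, ENNReal.ofReal_mul (by positivity)]
  · rw [EE_np h, EE_np h, EE_np h, mul_zero]

lemma EE_zero {x : ℝ} (h : 0 < x) : EE 0 x = 1 := by simp [EE_pos h]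

lemma EE_one {x : ℝ} (h : 0 < x) : EE 1 x = ENNReal.ofReal x := by simp [EE_pos h]

lemma EE_ne_top {a x : ℝ} : EE a x ≠ ⊤ := by
  unfold EE; split_ifs <;> simp

lemma lint_affine {f : ℝ → ENNReal} (hf : Measurable f) (b : ℝ) {c : ℝ} (hc : c ≠ 0) :
    ∫⁻ x, f x = ENNReal.ofReal |c| * ∫⁻ t, f (b + c * t) := by
  have h1 : ∫⁻ x, f x = ∫⁻ x, f (b + x) := (lintegral_add_left_eq_self f b).symm
  rw [h1]
  have hm : Measurable fun x => f (b + x) := by fun_prop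
  conv_lhs => rw [← Real.smul_map_volume_mul_left hc]
  rw [lintegral_smul_measure, lintegral_map hm (by fun_prop)]
  rfl

lemma lint_scale {f : ℝ → ENNReal} (hf : Measurable f) {c : ℝ} (hc : 0 < c) :
    ∫⁻ x, f x = EE 1 c * ∫⁻ t, f (c * t) := by
  rw [lint_affine hf 0 hc.ne', abs_of_pos hc, EE_one hc]
  simp

lemma lint_refl {f : ℝ → ENNReal} (hf : Measurable f) :
    ∫⁻ x, f x = ∫⁻ t, f (1 - t) := by
  rw [lint_affine hf 1 (c := -1) (by norm_num)]
  simp [sub_eq_add_neg]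

lemma EE_beta {a b : ℝ} (ha : 0 < a) (hb : 0 < b) :
    ∫⁻ x, EE (a - 1) x * EE (b - 1) (1 - x) = ENNReal.ofReal (ProbabilityTheory.beta a b) := by
  have hB := ProbabilityTheory.beta_pos ha hb
  have h : ∀ x, EE (a - 1) x * EE (b - 1) (1 - x)
      = ENNReal.ofReal (ProbabilityTheory.beta a b) * ProbabilityTheory.betaPDF a b x := by
    intro x
    rcases lt_or_ge 0 x with h | h
    · rcases lt_or_ge x 1 with h' | h'
      · have h1 : 0 < 1 - x := by linarith
        rw [ProbabilityTheory.betaPDF_of_pos_lt_one h h', EE_pos h, EE_pos h1,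
          ← ENNReal.ofReal_mul (by positivity), ← ENNReal.ofReal_mul hB.le]
        congr 1
        field_simp
      · rw [EE_np (a := b - 1) (by linarith), ProbabilityTheory.betaPDF_eq_zero_of_one_le h']
        simp
    · rw [EE_np h, ProbabilityTheory.betaPDF_eq_zero_of_nonpos h]
      simp
  simp_rw [h]
  rw [lintegral_const_mul _ (by
    unfold ProbabilityTheory.betaPDF; fun_prop),
    ProbabilityTheory.lintegral_betaPDF_eq_one ha hb, mul_one]

lemma beta_one {a : ℝ} (ha : 0 < a) : ProbabilityTheory.beta a 1 = 1 / a := by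
  rw [ProbabilityTheory.beta, Real.Gamma_add_one ha.ne', Real.Gamma_one]
  have := Real.Gamma_pos_of_pos ha
  field_simp

lemma EE_pow {a : ℝ} (ha : 0 < a) :
    ∫⁻ x, EE (a - 1) x * EE 0 (1 - x) = ENNReal.ofReal (1 / a) := by
  have := EE_beta ha one_pos
  rwa [beta_one ha, sub_self] at this

lemma poch_zero (a : ℝ) : poch a 0 = 1 := by simp [poch]

lemma poch_succ (a : ℝ) (k : ℕ) : poch a (k + 1) = poch a k * (a + k) := by
  simp [poch, ascPochhammer_succ_right]

lemma poch_pos {a : ℝ} (ha : 0 < a) (k : ℕ) : 0 < poch a k := ascPochhammer_pos k a ha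

lemma poch_nonneg {a : ℝ} (ha : 0 ≤ a) (k : ℕ) : 0 ≤ poch a k := by
  induction k with
  | zero => simp [poch_zero]
  | succ k ih => rw [poch_succ]; positivity

lemma poch_one (k : ℕ) : poch 1 k = (k.factorial : ℝ) := by
  simp [poch]

lemma poch_Gamma {a : ℝ} (ha : 0 < a) (k : ℕ) :
    Real.Gamma (a + k) = Real.Gamma a * poch a k := by
  induction k with
  | zero => simp [poch_zero]
  | succ k ih =>
    rw [poch_succ]
    push_cast
    rw [← add_assoc, Real.Gamma_add_one (by positivity), ih]
    ring

lemma poch_ratio {a : ℝ} (ha : 0 < a) (k : ℕ) :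
    poch a k / poch (a + 1) k = a / (a + k) := by
  have h1 := poch_Gamma ha k
  have h2 := poch_Gamma (a := a + 1) (by positivity) k
  have h3 := poch_pos (a := a + 1) (by positivity) k
  have h4 : 0 < a + k := by positivity
  have h5 := Real.Gamma_pos_of_pos ha
  rw [show a + 1 + (k : ℝ) = a + k + 1 by ring, Real.Gamma_add_one h4.ne', Real.Gamma_add_one ha.ne',
    h1] at h2
  rw [div_eq_div_iff h3.ne' h4.ne']
  have : Real.Gamma a * (poch a k * (a + k)) = Real.Gamma a * (a * poch (a + 1) k) := by
    linear_combination h2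
  exact mul_left_cancel₀ h5.ne' this

lemma binom_hasSum (d : ℝ) {x : ℝ} (hx : |x| < 1) :
    HasSum (fun k : ℕ => poch d k / k.factorial * x ^ k) ((1 - x) ^ (-d)) := by
  have h := (Real.one_div_one_sub_rpow_hasFPowerSeriesOnBall_zero d).hasSum (y := x)
    (by simpa [← ofReal_norm, ENNReal.ofReal_lt_one] using hx)
  have hx1 : 0 ≤ 1 - x := by linarith [le_abs_self x]
  convert! h using 1
  · ext k
    simp only [FormalMultilinearSeries.ofScalars_apply_eq, smul_eq_mul]
    congr 1
    have h2 := Ring.factorial_nsmul_multichoose_eq_ascPochhammer d k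
    rw [Ring.choose]
    have h3 : d + (k : ℝ) - 1 - k + 1 = d := by ring
    rw [h3, poch, ← Polynomial.ascPochhammer_smeval_eq_eval, ← h2]
    have : (k.factorial : ℝ) ≠ 0 := by positivity
    simp only [nsmul_eq_mul]
    field_simp
  · simp [Real.rpow_neg hx1]

noncomputable def TT (d z : ℝ) : ENNReal := ∫⁻ r, EE 0 r * EE (-d) (1 - r) * EE (-d) (1 - z * r)

@[fun_prop]
lemma measurable_lint {α : Type*} [MeasurableSpace α] {f : α → ℝ → ENNReal}
    (hf : Measurable (fun p : α × ℝ => f p.1 p.2)) : Measurable (fun x => ∫⁻ y, f x y) :=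
  Measurable.lintegral_prod_right' hf

@[fun_prop]
lemma measurable_TT (d : ℝ) : Measurable (TT d) := by
  unfold TT
  fun_prop

@[fun_prop]
lemma measurable_TT_comp {α : Type*} [MeasurableSpace α] (a : ℝ) {f : α → ℝ} (hf : Measurable f) :
    Measurable (fun x => TT a (f x)) := (measurable_TT a).comp hf

noncomputable def Cc (d : ℝ) (k : ℕ) : ℝ :=
  poch 1 k * poch d k / poch (2 - d) k / k.factorial / (1 - d)

lemma Cc_nonneg {d : ℝ} (h0 : 0 ≤ d) (h1 : d < 1) (k : ℕ) : 0 ≤ Cc d k := by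
  have h2 := poch_pos (a := 1) one_pos k
  have h3 := poch_nonneg h0 k
  have h4 := poch_pos (a := 2 - d) (by linarith) k
  have h5 : 0 < 1 - d := by linarith
  unfold Cc
  positivity

lemma beta_k {d : ℝ} (h1 : d < 1) (k : ℕ) :
    ProbabilityTheory.beta (k + 1) (1 - d) = k.factorial / ((1 - d) * poch (2 - d) k) := by
  have h5 : 0 < 1 - d := by linarith
  have h6 := poch_Gamma (a := 2 - d) (by linarith) k
  have h4 := poch_pos (a := 2 - d) (by linarith) k
  have h7 := Real.Gamma_add_one h5.ne'
  have h8 := Real.Gamma_pos_of_pos h5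
  rw [show 1 - d + 1 = 2 - d by ring] at h7
  rw [ProbabilityTheory.beta, Real.Gamma_nat_eq_factorial,
    show (k : ℝ) + 1 + (1 - d) = 2 - d + k by ring, h6, h7]
  field_simp

lemma EE_natCast {a x : ℝ} (k : ℕ) : EE a x * ENNReal.ofReal (x ^ k) = EE (a + k) x := by
  rcases lt_or_ge 0 x with h | h
  · rw [← EE_mul, EE_pos (a := (k : ℝ)) h, Real.rpow_natCast]
  · rw [EE_np h, EE_np h, zero_mul]

lemma TT_series {d z : ℝ} (h0 : 0 ≤ d) (h1 : d < 1) (hz : 0 ≤ z) (hz1 : z < 1) :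
    TT d z = ∑' k : ℕ, ENNReal.ofReal (Cc d k) * ENNReal.ofReal (z ^ k) := by
  have key : ∀ r : ℝ, EE 0 r * EE (-d) (1 - r) * EE (-d) (1 - z * r)
      = ∑' k : ℕ, ENNReal.ofReal (poch d k / k.factorial * z ^ k) *
        (EE ((k : ℝ) + 1 - 1) r * EE (1 - d - 1) (1 - r)) := by
    intro r
    rcases le_or_gt r 0 with h | h
    · simp [EE_np h]
    rcases le_or_gt 1 r with h' | h'
    · simp [EE_np (x := 1 - r) (by linarith)]
    have hzr : z * r < 1 := by nlinarith
    have hzr0 : 0 ≤ z * r := by positivity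
    have hs := binom_hasSum d (x := z * r) (by rwa [abs_of_nonneg hzr0])
    rw [EE_zero h, one_mul, EE_pos (x := 1 - z * r) (by linarith), ← hs.tsum_eq,
      ENNReal.ofReal_tsum_of_nonneg _ hs.summable, ← ENNReal.tsum_mul_left]
    · congr 1
      ext k
      have h3 := poch_nonneg h0 k
      rw [show 1 - d - 1 = -d by ring, show (k : ℝ) + 1 - 1 = 0 + k by ring, ← EE_natCast,
        EE_zero h, one_mul, mul_pow, ← mul_assoc, ENNReal.ofReal_mul (by positivity)]
      ring
    · intro k
      have h3 := poch_nonneg h0 k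
      positivity
  unfold TT
  simp_rw [key]
  rw [lintegral_tsum (fun k => by fun_prop)]
  congr 1
  ext k
  have h3 := poch_nonneg h0 k
  have h4 := poch_pos (a := 2 - d) (by linarith) k
  have h5 : 0 < 1 - d := by linarith
  rw [lintegral_const_mul _ (by fun_prop), EE_beta (by positivity) (by linarith), beta_k h1,
    ← ENNReal.ofReal_mul (by positivity), ← ENNReal.ofReal_mul (Cc_nonneg h0 h1 k)]
  congr 1
  rw [Cc, poch_one]
  field_simp

lemma hyp2F1_TT {d z : ℝ} (h0 : 0 ≤ d) (h1 : d < 1) (hz : 0 ≤ z) (hz1 : z < 1) :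
    hyp2F1 1 d (2 - d) z = (1 - d) * (TT d z).toReal := by
  have h5 : 1 - d ≠ 0 := by linarith
  rw [TT_series h0 h1 hz hz1, ENNReal.tsum_toReal_eq (fun k => by finiteness), ← tsum_mul_left,
    hyp2F1]
  congr 1
  ext k
  rw [ENNReal.toReal_mul, ENNReal.toReal_ofReal (Cc_nonneg h0 h1 k),
    ENNReal.toReal_ofReal (by positivity), Cc]
  field_simp

lemma TT_le {d z : ℝ} (h0 : 0 ≤ d) (h1 : d < 1) (hz : 0 ≤ z) (hz1 : z < 1) :
    TT d z ≤ EE (-d) (1 - z) * ENNReal.ofReal (1 / (1 - d)) := by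
  have := EE_beta (a := 1) (b := 1 - d) one_pos (by linarith)
  have hb := beta_k h1 0
  simp only [Nat.cast_zero, zero_add, poch_zero] at hb
  rw [hb] at this
  simp only [Nat.factorial_zero, Nat.cast_one, mul_one] at this
  rw [← this, ← lintegral_const_mul _ (by fun_prop)]
  unfold TT
  apply lintegral_mono
  intro r
  simp only
  rw [show (1 : ℝ) - 1 = 0 by ring, show 1 - d - 1 = -d by ring]
  rcases le_or_gt r 0 with h | h
  · simp [EE_np h]
  rcases le_or_gt 1 r with h' | h'
  · simp [EE_np (x := 1 - r) (by linarith)]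
  have hzr : z * r < 1 := by nlinarith
  rw [mul_comm]
  gcongr
  rw [EE_pos (by linarith), EE_pos (by linarith)]
  apply ENNReal.ofReal_le_ofReal
  apply Real.rpow_le_rpow_of_nonpos (by linarith) (by nlinarith) (by linarith)

lemma inner_series {d a : ℝ} (h0 : 0 ≤ d) (h1 : d < 1) (ha : 0 < a) (ha1 : a ≤ 1) :
    ∫⁻ p, EE (1 - 2 * d) p * EE 0 (1 - p) * TT d (a * p)
      = ∑' k : ℕ, ENNReal.ofReal (Cc d k / (2 - 2 * d + k)) * ENNReal.ofReal (a ^ k) := by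
  have key : ∀ p : ℝ, EE (1 - 2 * d) p * EE 0 (1 - p) * TT d (a * p)
      = ∑' k : ℕ, ENNReal.ofReal (Cc d k * a ^ k) *
        (EE (2 - 2 * d + k - 1) p * EE 0 (1 - p)) := by
    intro p
    rcases le_or_gt p 0 with h | h
    · simp [EE_np h]
    rcases le_or_gt 1 p with h' | h'
    · simp [EE_np (x := 1 - p) (by linarith)]
    rw [TT_series h0 h1 (by positivity) (by nlinarith), ← ENNReal.tsum_mul_left]
    congr 1
    ext k
    rw [show 2 - 2 * d + k - 1 = 1 - 2 * d + k by ring, ← EE_natCast, mul_pow,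
      ENNReal.ofReal_mul (by positivity), ENNReal.ofReal_mul (Cc_nonneg h0 h1 k)]
    ring
  simp_rw [key]
  rw [lintegral_tsum (fun k => by fun_prop)]
  congr 1
  ext k
  have h3 := Cc_nonneg h0 h1 k
  have h4 : 0 < 2 - 2 * d := by linarith
  rw [lintegral_const_mul _ (by fun_prop), EE_pow (by positivity),
    ← ENNReal.ofReal_mul (by positivity), ← ENNReal.ofReal_mul (by positivity)]
  congr 1
  field_simp

noncomputable def MM (d : ℝ) : ENNReal := ∫⁻ Q, EE (1 - 2 * d) Q * EE 0 (1 - Q) * TT d Q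

noncomputable def NN (d : ℝ) : ENNReal := ∫⁻ a, EE (2 - 3 * d) a * EE (-d) (1 - a) *
  ∫⁻ p, EE (1 - 2 * d) p * EE 0 (1 - p) * TT d (a * p)

lemma MM_toReal {d : ℝ} (h0 : 0 ≤ d) (h1 : d < 1) :
    (MM d).toReal = 1 / ((1 - d) * (2 - 2 * d)) *
      hyp3F2 1 d (2 - 2 * d) (2 - d) (3 - 2 * d) 1 := by
  have h := inner_series h0 h1 one_pos le_rfl
  simp only [one_mul, one_pow] at h
  rw [MM, h, ENNReal.tsum_toReal_eq (fun k => by finiteness), hyp3F2, ← tsum_mul_left]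
  congr 1
  ext k
  have h3 := Cc_nonneg h0 h1 k
  have h4 : 0 < 2 - 2 * d := by linarith
  have h6 : 0 < 1 - d := by linarith
  rw [ENNReal.toReal_mul, ENNReal.toReal_ofReal (by positivity),
    ENNReal.toReal_ofReal (by positivity), Cc]
  have h5 := poch_ratio h4 k
  rw [show 2 - 2 * d + 1 = 3 - 2 * d by ring] at h5
  have h7 : poch 1 k * poch d k * poch (2 - 2 * d) k / (poch (2 - d) k * poch (3 - 2 * d) k)
    = poch 1 k * poch d k / poch (2 - d) k * (poch (2 - 2 * d) k / poch (3 - 2 * d) k) := by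
    rw [mul_div_mul_comm]
  have h8 := poch_pos (a := 2 - d) (by linarith) k
  have h9 : 0 < 2 - 2 * d + k := by positivity
  rw [h7, h5]
  simp only [one_pow, mul_one]
  field_simp

lemma NN_toReal {d : ℝ} (h0 : 0 ≤ d) (h1 : d < 1) :
    (NN d).toReal = ProbabilityTheory.beta (3 - 3 * d) (1 - d) / ((1 - d) * (2 - 2 * d)) *
      hyp4F3 1 d (2 - 2 * d) (3 - 3 * d) (2 - d) (3 - 2 * d) (4 - 4 * d) 1 := by
  have h4 : 0 < 2 - 2 * d := by linarith
  have h6 : 0 < 1 - d := by linarith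
  have h33 : 0 < 3 - 3 * d := by linarith
  have key : ∀ a : ℝ, EE (2 - 3 * d) a * EE (-d) (1 - a) *
      (∫⁻ p, EE (1 - 2 * d) p * EE 0 (1 - p) * TT d (a * p))
      = ∑' k : ℕ, ENNReal.ofReal (Cc d k / (2 - 2 * d + k)) *
        (EE (3 - 3 * d + k - 1) a * EE (1 - d - 1) (1 - a)) := by
    intro p
    rcases le_or_gt p 0 with h | h
    · simp [EE_np h]
    rcases le_or_gt 1 p with h' | h'
    · simp [EE_np (x := 1 - p) (by linarith)]
    rw [inner_series h0 h1 h h'.le, ← ENNReal.tsum_mul_left]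
    congr 1
    ext k
    rw [show 3 - 3 * d + k - 1 = 2 - 3 * d + k by ring, ← EE_natCast,
      show 1 - d - 1 = -d by ring]
    ring
  unfold NN
  simp_rw [key]
  rw [lintegral_tsum (fun k => by fun_prop)]
  have key2 : ∀ k : ℕ, ∫⁻ a, ENNReal.ofReal (Cc d k / (2 - 2 * d + k)) *
        (EE (3 - 3 * d + k - 1) a * EE (1 - d - 1) (1 - a))
      = ENNReal.ofReal (Cc d k / (2 - 2 * d + k) *
        ProbabilityTheory.beta (3 - 3 * d + k) (1 - d)) := by
    intro k
    have h3 := Cc_nonneg h0 h1 k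
    rw [lintegral_const_mul _ (by fun_prop), EE_beta (by positivity) h6,
      ← ENNReal.ofReal_mul (by positivity)]
  simp_rw [key2]
  rw [ENNReal.tsum_toReal_eq (fun k => by finiteness), hyp4F3, ← tsum_mul_left]
  congr 1
  ext k
  have h3 := Cc_nonneg h0 h1 k
  have hb := ProbabilityTheory.beta_pos (α := 3 - 3 * d + k) (by positivity) h6
  rw [ENNReal.toReal_ofReal (by positivity)]
  have h5 := poch_ratio h4 k
  rw [show 2 - 2 * d + 1 = 3 - 2 * d by ring] at h5
  have h7 : poch 1 k * poch d k * poch (2 - 2 * d) k * poch (3 - 3 * d) k /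
      (poch (2 - d) k * poch (3 - 2 * d) k * poch (4 - 4 * d) k)
    = poch 1 k * poch d k / poch (2 - d) k * (poch (2 - 2 * d) k / poch (3 - 2 * d) k) *
      (poch (3 - 3 * d) k / poch (4 - 4 * d) k) := by
    rw [mul_div_mul_comm, mul_div_mul_comm]
  have h8 := poch_pos (a := 2 - d) (by linarith) k
  have h10 := poch_pos (a := 4 - 4 * d) (by linarith) k
  have h9 : 0 < 2 - 2 * d + k := by positivity
  have hG := Real.Gamma_pos_of_pos (s := 4 - 4 * d) (by linarith)
  have hbk : ProbabilityTheory.beta (3 - 3 * d + k) (1 - d)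
      = ProbabilityTheory.beta (3 - 3 * d) (1 - d) * (poch (3 - 3 * d) k / poch (4 - 4 * d) k) := by
    unfold ProbabilityTheory.beta
    rw [show 3 - 3 * d + k + (1 - d) = 4 - 4 * d + k by ring, poch_Gamma h33,
      poch_Gamma (a := 4 - 4 * d) (by linarith), show 3 - 3 * d + (1 - d) = 4 - 4 * d by ring]
    field_simp
  rw [h7, h5, hbk, Cc]
  simp only [one_pow, mul_one]
  field_simp

lemma MM_ne_top {d : ℝ} (h0 : 0 ≤ d) (h1 : d < 1) : MM d ≠ ⊤ := by
  have h : MM d ≤ ∫⁻ Q, ENNReal.ofReal (1 / (1 - d)) * (EE (2 - 2 * d - 1) Q * EE (1 - d - 1) (1 - Q)) := by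
    unfold MM
    apply lintegral_mono
    intro p
    simp only
    rcases le_or_gt p 0 with h | h
    · simp [EE_np h]
    rcases le_or_gt 1 p with h' | h'
    · simp [EE_np (x := 1 - p) (by linarith)]
    rw [EE_zero (by linarith), show 2 - 2 * d - 1 = 1 - 2 * d by ring,
      show 1 - d - 1 = -d by ring]
    calc _ ≤ EE (1 - 2 * d) p * 1 * (EE (-d) (1 - p) * ENNReal.ofReal (1 / (1 - d))) := by
          gcongr
          exact TT_le h0 h1 h.le h'
      _ = _ := by ring
  refine ne_top_of_le_ne_top ?_ h
  rw [lintegral_const_mul _ (by fun_prop), EE_beta (by linarith) (by linarith)]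
  finiteness

noncomputable def PP (d X : ℝ) : ENNReal := EE 0 X * EE (-d) (1 - X) *
  ∫⁻ Q, EE (-d) Q * EE (-d) (Q - X) * EE 0 (1 - Q)

@[fun_prop]
lemma measurable_PP (d : ℝ) : Measurable (PP d) := by
  unfold PP
  fun_prop

@[fun_prop]
lemma measurable_PP_comp {α : Type*} [MeasurableSpace α] (a : ℝ) {f : α → ℝ} (hf : Measurable f) :
    Measurable (fun x => PP a (f x)) := (measurable_PP a).comp hf

noncomputable def KK (d : ℝ) : ENNReal :=
  ∫⁻ X, ∫⁻ Y, EE 0 (Y - X) * (EE (-d) Y * EE (-d) (1 - Y)) * PP d X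

noncomputable def KK2 (d : ℝ) : ENNReal :=
  ∫⁻ X, ∫⁻ Y, EE 0 (X - Y) * (EE (-d) Y * EE (-d) (1 - Y)) * PP d X

lemma TT_scaled {d b : ℝ} (hb : 0 < b) :
    ∫⁻ c, EE 0 c * EE (-d) (1 - c) * EE (-d) (b - c) = EE (1 - d) b * TT d b := by
  rw [lint_scale (by fun_prop) hb, show 1 - d = 1 + -d by ring, ← EE_mul, mul_assoc]
  congr 1
  rw [TT, ← lintegral_const_mul _ (by fun_prop)]
  congr 1
  ext r
  rw [EE_mul_arg hb, show b - b * r = b * (1 - r) by ring, EE_mul_arg hb, EE_zero hb]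
  ring

lemma PP_int {d : ℝ} : ∫⁻ X, PP d X = MM d := by
  unfold PP MM
  simp_rw [← lintegral_const_mul' _ _ (ENNReal.mul_ne_top EE_ne_top EE_ne_top)]
  rw [lintegral_lintegral_swap (by fun_prop)]
  congr 1
  ext Q
  rcases le_or_gt Q 0 with h | h
  · simp [EE_np h]
  have : ∀ X, EE 0 X * EE (-d) (1 - X) * (EE (-d) Q * EE (-d) (Q - X) * EE 0 (1 - Q))
    = (EE (-d) Q * EE 0 (1 - Q)) * (EE 0 X * EE (-d) (1 - X) * EE (-d) (Q - X)) := by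
    intro X; ring
  simp_rw [this]
  rw [lintegral_const_mul _ (by fun_prop), TT_scaled h,
    show 1 - 2 * d = -d + (1 - d) by ring, ← EE_mul]
  ring

lemma KK_add {d : ℝ} (h1 : d < 1) :
    KK d + KK2 d = ENNReal.ofReal (ProbabilityTheory.beta (1 - d) (1 - d)) * MM d := by
  unfold KK KK2
  rw [← lintegral_add_left (by fun_prop), ← PP_int, ← lintegral_const_mul _ (by fun_prop)]
  congr 1
  ext X
  rw [← lintegral_add_left (by fun_prop), ← EE_beta (by linarith) (by linarith),
    ← lintegral_mul_const _ (by fun_prop)]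
  apply lintegral_congr_ae
  have : ∀ᵐ Y : ℝ, Y ≠ X := by simp [ae_iff, measure_singleton]
  filter_upwards [this] with Y hY
  rw [show 1 - d - 1 = -d by ring]
  rcases lt_or_gt_of_ne hY with h | h
  · rw [EE_np (x := Y - X) (by linarith), EE_zero (x := X - Y) (by linarith)]
    ring
  · rw [EE_np (x := X - Y) (by linarith), EE_zero (x := Y - X) (by linarith)]
    ring

lemma PP_refl {d b : ℝ} (hb : 0 < b) : PP d (1 - b) = EE 0 (1 - b) * EE (1 - 2 * d) b * TT d b := by
  unfold PP
  rw [lint_refl (by fun_prop)]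
  have : ∀ t, EE (-d) (1 - t) * EE (-d) (1 - t - (1 - b)) * EE 0 (1 - (1 - t))
      = EE 0 t * EE (-d) (1 - t) * EE (-d) (b - t) := by
    intro t
    rw [show 1 - t - (1 - b) = b - t by ring, show 1 - (1 - t) = t by ring]
    ring
  simp_rw [this]
  rw [TT_scaled hb, show 1 - (1 - b) = b by ring,
    show 1 - 2 * d = -d + (1 - d) by ring, ← EE_mul]
  ring

lemma KK2_eq {d : ℝ} : KK2 d = NN d := by
  unfold KK2 NN
  rw [lintegral_lintegral_swap (by fun_prop), lint_refl (by fun_prop)]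
  congr 1
  ext a
  rcases le_or_gt a 0 with h | h
  · simp [EE_np h]
  rcases le_or_gt 1 a with h' | h'
  · simp [EE_np (x := 1 - a) (by linarith)]
  rw [lint_refl (by fun_prop), lint_scale (by fun_prop) h, ← lintegral_const_mul _ (by fun_prop),
    ← lintegral_const_mul _ (by fun_prop)]
  congr 1
  ext p
  rcases le_or_gt 1 p with hp | hp
  · rw [EE_np (x := 1 - a * p - (1 - a)) (by nlinarith), EE_np (x := 1 - p) (by linarith)]
    simp
  rcases le_or_gt p 0 with hp0 | hp0
  · have h3 : 1 - (1 - a * p) ≤ 0 := by nlinarith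
    unfold PP
    rw [EE_np (x := 1 - (1 - a * p)) h3, EE_np hp0]
    simp
  rw [PP_refl (by positivity), EE_zero (x := 1 - a * p - (1 - a)) (by nlinarith),
    EE_zero (x := 1 - p) (by linarith), EE_zero (x := 1 - a * p) (by nlinarith),
    EE_mul_arg h, show 1 - (1 - a) = a by ring,
    show 2 - 3 * d = 1 + ((1 - 2 * d) + -d) by ring, ← EE_mul 1, ← EE_mul _ (-d)]
  ring

noncomputable def HH (d x y z q : ℝ) : ENNReal :=
  EE (-d) (1 - y) * EE (-d) (1 - q) * EE (-d) (y - z) * EE (-d) (x - z) * EE (-d) (x - q) *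
    EE 0 z * EE 0 (x - y) * EE 0 (q - z) * EE 0 (1 - x)

@[fun_prop]
lemma measurable_HH {α : Type*} [MeasurableSpace α] (d : ℝ) {x y z q : α → ℝ} (hx : Measurable x)
    (hy : Measurable y) (hz : Measurable z) (hq : Measurable q) :
    Measurable (fun p => HH d (x p) (y p) (z p) (q p)) := by
  unfold HH
  fun_prop

lemma HH_zero {d x y z q : ℝ} (h : ¬ (0 < z ∧ z < y ∧ y < x ∧ x < 1)) :
    HH d x y z q = 0 := by
  unfold HH
  by_cases h1 : 0 < z
  · by_cases h2 : z < y
    · by_cases h3 : y < x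
      · have h4 : 1 - x ≤ 0 := by
          by_contra h4
          exact h ⟨h1, h2, h3, by linarith⟩
        rw [EE_np h4]; simp
      · rw [EE_np (x := x - y) (by linarith)]; simp
    · rw [EE_np (x := y - z) (by linarith)]; simp
  · rw [EE_np (x := z) (by linarith)]; simp

noncomputable def JJ (d : ℝ) : ENNReal := ∫⁻ x, ∫⁻ y, ∫⁻ z, ∫⁻ q, HH d x y z q

lemma JJ_eq {d : ℝ} (h1 : d < 4 / 5) : JJ d = ENNReal.ofReal (1 / (4 - 5 * d)) * KK d := by
  have e1 : JJ d = ∫⁻ z, ∫⁻ x, ∫⁻ y, ∫⁻ q, HH d x y z q := by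
    rw [lintegral_lintegral_swap (by fun_prop)]
    unfold JJ
    congr 1
    ext x
    rw [lintegral_lintegral_swap (by fun_prop)]
  have e2 : ∀ z, ∫⁻ x, ∫⁻ y, ∫⁻ q, HH d x y z q
      = EE (4 - 5 * d - 1) (1 - z) * EE 0 z * KK d := by
    intro z
    rcases le_or_gt 1 z with h | h
    · have : ∀ x y q, HH d x y z q = 0 := fun x y q => HH_zero (fun h' => by linarith)
      simp_rw [this]
      simp [EE_np (x := 1 - z) (by linarith)]
    obtain ⟨c, hc⟩ : ∃ c, c = 1 - z := ⟨_, rfl⟩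
    have hc0 : 0 < c := by linarith
    have habs : ENNReal.ofReal |(-c)| = EE 1 c := by rw [abs_neg, abs_of_pos hc0, EE_one hc0]
    have hz : z = 1 - c := by linarith
    have hcn : -c ≠ 0 := by linarith
    rw [← hc, lint_affine (by fun_prop) 1 hcn, habs, KK, ← lintegral_const_mul _ (by fun_prop),
      ← lintegral_const_mul _ (by fun_prop)]
    congr 1
    ext X
    rw [lint_affine (by fun_prop) 1 hcn, habs, ← lintegral_const_mul _ (by fun_prop),
      ← lintegral_const_mul _ (by fun_prop), ← lintegral_const_mul _ (by fun_prop)]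
    congr 1
    ext Y
    rw [lint_affine (by fun_prop) 1 hcn, habs, PP, ← lintegral_const_mul _ (by fun_prop),
      ← lintegral_const_mul _ (by fun_prop), ← lintegral_const_mul _ (by fun_prop),
      ← lintegral_const_mul _ (by fun_prop), ← lintegral_const_mul _ (by fun_prop),
      ← lintegral_const_mul _ (by fun_prop)]
    congr 1
    ext Q
    unfold HH
    rw [show 1 - (1 + -c * Y) = c * Y by ring, show 1 - (1 + -c * Q) = c * Q by ring,
      show 1 + -c * Y - z = c * (1 - Y) by rw [hz]; ring,
      show 1 + -c * X - z = c * (1 - X) by rw [hz]; ring,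
      show 1 + -c * X - (1 + -c * Q) = c * (Q - X) by ring,
      show 1 + -c * X - (1 + -c * Y) = c * (Y - X) by ring,
      show 1 + -c * Q - z = c * (1 - Q) by rw [hz]; ring,
      show 1 - (1 + -c * X) = c * X by ring]
    simp only [EE_mul_arg hc0, EE_zero hc0]
    rw [show 4 - 5 * d - 1 = 1 + (1 + (1 + (-d + (-d + (-d + (-d + -d)))))) by ring]
    simp only [← EE_mul]
    ring
  rw [e1]
  simp_rw [e2]
  rw [lintegral_mul_const _ (by fun_prop), lint_refl (by fun_prop)]
  congr 1
  rw [← EE_pow (by linarith)]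
  simp

noncomputable def FF (d u v w : ℝ) : ENNReal :=
  EE (3 - 3 * d) u * EE (1 - d) v * EE (-d) (1 - u * v) * EE (1 - 2 * d) (1 - v * w) *
    EE (-d) (1 - w) * EE (-d) (1 - u * v * w) * TT d (u * (1 - v * w) / (1 - u * v * w))

@[fun_prop]
lemma measurable_FF {α : Type*} [MeasurableSpace α] (d : ℝ) {x y z : α → ℝ} (hx : Measurable x)
    (hy : Measurable y) (hz : Measurable z) :
    Measurable (fun p => FF d (x p) (y p) (z p)) := by
  unfold FF
  fun_prop

lemma lint_Ioo (g : ℝ → ENNReal) :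
    ∫⁻ u in Set.Ioo (0 : ℝ) 1, g u = ∫⁻ u, EE 0 u * EE 0 (1 - u) * g u := by
  rw [← lintegral_indicator measurableSet_Ioo]
  congr 1
  ext u
  by_cases h : u ∈ Set.Ioo (0 : ℝ) 1
  · rw [Set.indicator_of_mem h, EE_zero h.1, EE_zero (by linarith [h.2])]
    simp
  · rw [Set.indicator_of_notMem h]
    rcases le_or_gt u 0 with h' | h'
    · simp [EE_np h']
    · have : 1 - u ≤ 0 := by
        by_contra h2
        exact h ⟨h', by linarith⟩
      simp [EE_np this]

lemma JJ_cube {d : ℝ} :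
    JJ d = ∫⁻ u in Set.Ioo (0 : ℝ) 1, ∫⁻ v in Set.Ioo (0 : ℝ) 1, ∫⁻ w in Set.Ioo (0 : ℝ) 1,
      FF d u v w := by
  simp_rw [lint_Ioo]
  unfold JJ
  congr 1
  ext u
  rcases le_or_gt u 0 with hu | hu
  · have : ∀ y z q, HH d u y z q = 0 := fun y z q => HH_zero (fun h' => by linarith)
    simp [this, EE_np hu]
  rcases le_or_gt 1 u with hu1 | hu1
  · have : ∀ y z q, HH d u y z q = 0 := fun y z q => HH_zero (fun h' => by linarith)
    simp [this, EE_np (x := 1 - u) (by linarith)]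
  rw [EE_zero hu, EE_zero (x := 1 - u) (by linarith), lint_scale (by fun_prop) hu, one_mul, one_mul,
    ← lintegral_const_mul _ (by fun_prop)]
  congr 1
  ext v
  rcases le_or_gt v 0 with hv | hv
  · have : ∀ z q, HH d u (u * v) z q = 0 := fun z q => HH_zero (fun h' => by nlinarith)
    simp [this, EE_np hv]
  rcases le_or_gt 1 v with hv1 | hv1
  · have : ∀ z q, HH d u (u * v) z q = 0 := fun z q => HH_zero (fun h' => by nlinarith)
    simp [this, EE_np (x := 1 - v) (by linarith)]
  have huv : 0 < u * v := by positivity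
  have huv1 : u * v < 1 := by nlinarith
  rw [EE_zero hv, EE_zero (x := 1 - v) (by linarith), lint_scale (by fun_prop) huv, one_mul, one_mul,
    ← lintegral_const_mul _ (by fun_prop), ← lintegral_const_mul _ (by fun_prop)]
  congr 1
  ext w
  rcases le_or_gt w 0 with hw | hw
  · have : ∀ q, HH d u (u * v) (u * v * w) q = 0 := fun q => HH_zero (fun h' => by nlinarith)
    simp [this, EE_np hw]
  rcases le_or_gt 1 w with hw1 | hw1
  · have : ∀ q, HH d u (u * v) (u * v * w) q = 0 := fun q => HH_zero (fun h' => by nlinarith)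
    simp [this, EE_np (x := 1 - w) (by linarith)]
  have hvw : v * w < 1 := by nlinarith
  have huvw : u * v * w < 1 := by nlinarith
  have hvw' : 0 < 1 - v * w := by linarith
  have huvw' : 0 < 1 - u * v * w := by linarith
  have hc : 0 < u * (1 - v * w) := by positivity
  rw [EE_zero hw, EE_zero (x := 1 - w) (by linarith), one_mul, one_mul,
    lint_affine (by fun_prop) (u * v * w) hc.ne', abs_of_pos hc, ← EE_one hc, FF, TT,
    ← lintegral_const_mul _ (by fun_prop), ← lintegral_const_mul _ (by fun_prop),
    ← lintegral_const_mul _ (by fun_prop), ← lintegral_const_mul _ (by fun_prop)]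
  congr 1
  ext t
  unfold HH
  rw [show 1 - (u * v * w + u * (1 - v * w) * t)
      = (1 - u * v * w) * (1 - u * (1 - v * w) / (1 - u * v * w) * t) by field_simp; ring,
    show u * v - u * v * w = u * v * (1 - w) by ring,
    show u - u * v * w = u * (1 - v * w) by ring,
    show u - (u * v * w + u * (1 - v * w) * t) = u * (1 - v * w) * (1 - t) by ring,
    show u - u * v = u * (1 - v) by ring,
    show u * v * w + u * (1 - v * w) * t - u * v * w = u * (1 - v * w) * t by ring,
    EE_zero (x := u * v * w) (by positivity), EE_zero (x := 1 - u) (by linarith),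
    EE_zero (x := u * (1 - v)) (mul_pos hu (by linarith))]
  simp only [EE_mul_arg hc, EE_mul_arg huv, EE_mul_arg hu, EE_mul_arg huvw', EE_zero hu,
    EE_zero hvw']
  rw [show 3 - 3 * d = 1 + (1 + (1 + (-d + (-d + -d)))) by ring,
    show 1 - d = 1 + -d by ring, show 1 - 2 * d = 1 + (-d + -d) by ring]
  simp only [← EE_mul]
  ring

lemma iter_toReal {F : ℝ → ℝ → ℝ → ENNReal} {μ : Measure ℝ} [SFinite μ]
    (hF : Measurable (fun p : (ℝ × ℝ) × ℝ => F p.1.1 p.1.2 p.2))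
    (hfin : ∫⁻ u, ∫⁻ v, ∫⁻ w, F u v w ∂μ ∂μ ∂μ ≠ ⊤) :
    ∫ u, ∫ v, ∫ w, (F u v w).toReal ∂μ ∂μ ∂μ
      = (∫⁻ u, ∫⁻ v, ∫⁻ w, F u v w ∂μ ∂μ ∂μ).toReal := by
  have m1 : Measurable (fun p : ℝ × ℝ => ∫⁻ w, F p.1 p.2 w ∂μ) := hF.lintegral_prod_right'
  have m2 : Measurable (fun u : ℝ => ∫⁻ v, ∫⁻ w, F u v w ∂μ ∂μ) := m1.lintegral_prod_right'
  have a1 := ae_lt_top m2 hfin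
  rw [← integral_toReal m2.aemeasurable a1]
  apply integral_congr_ae
  filter_upwards [a1] with u hu
  have m3 : Measurable (fun v : ℝ => ∫⁻ w, F u v w ∂μ) := m1.comp (measurable_prodMk_left (x := u))
  have a2 := ae_lt_top m3 hu.ne
  rw [← integral_toReal m3.aemeasurable a2]
  apply integral_congr_ae
  filter_upwards [a2] with v hv
  have m4 : Measurable (fun w : ℝ => F u v w) := hF.comp (measurable_prodMk_left (x := (u, v)))
  exact integral_toReal m4.aemeasurable (ae_lt_top m4 hv.ne)

lemma FF_toReal {d u v w : ℝ} (h0 : 0 ≤ d) (h1 : d < 1) (hu : u ∈ Set.Ioo (0 : ℝ) 1)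
    (hv : v ∈ Set.Ioo (0 : ℝ) 1) (hw : w ∈ Set.Ioo (0 : ℝ) 1) :
    u ^ (3 - 3 * d) * v ^ (1 - d) * (1 - u * v) ^ (-d) * (1 - v * w) ^ (1 - 2 * d) *
          (1 - w) ^ (-d) * (1 - u * v * w) ^ (-d) *
          hyp2F1 1 d (2 - d) (u * (1 - v * w) / (1 - u * v * w))
      = (1 - d) * (FF d u v w).toReal := by
  obtain ⟨hu, hu1⟩ := hu
  obtain ⟨hv, hv1⟩ := hv
  obtain ⟨hw, hw1⟩ := hw
  have huv : 0 < u * v := by positivity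
  have huv1 : 0 < 1 - u * v := by nlinarith
  have hvw' : 0 < 1 - v * w := by nlinarith
  have huvw' : 0 < 1 - u * v * w := by nlinarith
  have hw' : 0 < 1 - w := by linarith
  rw [hyp2F1_TT h0 h1 (by positivity) (by rw [div_lt_one huvw']; nlinarith), FF]
  simp only [ENNReal.toReal_mul]
  rw [EE_pos hu, EE_pos hv, EE_pos huv1, EE_pos hvw', EE_pos hw', EE_pos huvw']
  rw [ENNReal.toReal_ofReal (by positivity), ENNReal.toReal_ofReal (by positivity),
    ENNReal.toReal_ofReal (by positivity), ENNReal.toReal_ofReal (by positivity),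
    ENNReal.toReal_ofReal (by positivity), ENNReal.toReal_ofReal (by positivity)]
  ring

lemma integral01 (f : ℝ → ℝ) : ∫ u in (0:ℝ)..1, f u = ∫ u in Set.Ioo (0:ℝ) 1, f u := by
  rw [intervalIntegral.integral_of_le zero_le_one, integral_Ioc_eq_integral_Ioo]

theorem triple_integral_J1 (d : ℝ) (hd0 : 0 ≤ d) (hd1 : d < 4 / 5) :
    1 / (1 - d) *
      (∫ u in (0:ℝ)..1, ∫ v in (0:ℝ)..1, ∫ w in (0:ℝ)..1,
        u ^ (3 - 3 * d) * v ^ (1 - d) * (1 - u * v) ^ (-d) * (1 - v * w) ^ (1 - 2 * d) *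
          (1 - w) ^ (-d) * (1 - u * v * w) ^ (-d) *
          hyp2F1 1 d (2 - d) (u * (1 - v * w) / (1 - u * v * w)))
    = Real.Gamma (1 - d) * Real.Gamma (2 - d) * Real.Gamma (4 - 5 * d) /
        ((1 - d) ^ 2 * Real.Gamma (3 - 2 * d) * Real.Gamma (5 - 5 * d)) *
        hyp3F2 1 d (2 - 2 * d) (2 - d) (3 - 2 * d) 1
      - Real.Gamma (1 - d) * Real.Gamma (3 - 3 * d) * Real.Gamma (4 - 5 * d) /
          (2 * (1 - d) ^ 2 * Real.Gamma (4 - 4 * d) * Real.Gamma (5 - 5 * d)) *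
          hyp4F3 1 d (2 - 2 * d) (3 - 3 * d) (2 - d) (3 - 2 * d) (4 - 4 * d) 1 := by
  have hd : d < 1 := by linarith
  have hd' : 0 < 1 - d := by linarith
  have hsum := KK_add hd
  have hMfin : ENNReal.ofReal (ProbabilityTheory.beta (1 - d) (1 - d)) * MM d ≠ ⊤ :=
    ENNReal.mul_ne_top ENNReal.ofReal_ne_top (MM_ne_top hd0 hd)
  rw [KK2_eq] at hsum
  have hfin2 := hMfin
  rw [← hsum] at hfin2
  have hK : KK d ≠ ⊤ := fun h => hfin2 (by simp [h])
  have hN : NN d ≠ ⊤ := fun h => hfin2 (by simp [h])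
  have hKr := congrArg ENNReal.toReal hsum
  have hb := ProbabilityTheory.beta_pos hd' hd'
  rw [ENNReal.toReal_add hK hN, ENNReal.toReal_mul, ENNReal.toReal_ofReal hb.le,
    MM_toReal hd0 hd, NN_toReal hd0 hd] at hKr
  have h45 : 0 < 4 - 5 * d := by linarith
  have hJfin : JJ d ≠ ⊤ := by
    rw [JJ_eq hd1]
    exact ENNReal.mul_ne_top ENNReal.ofReal_ne_top hK
  have hJ := JJ_cube (d := d)
  have hJr := congrArg ENNReal.toReal (JJ_eq hd1)
  rw [ENNReal.toReal_mul, ENNReal.toReal_ofReal (by positivity)] at hJr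
  rw [hJ] at hJfin
  have hit := iter_toReal (F := FF d) (by fun_prop) hJfin
  rw [← hJ, hJr] at hit
  have hL : (∫ u in (0:ℝ)..1, ∫ v in (0:ℝ)..1, ∫ w in (0:ℝ)..1,
        u ^ (3 - 3 * d) * v ^ (1 - d) * (1 - u * v) ^ (-d) * (1 - v * w) ^ (1 - 2 * d) *
          (1 - w) ^ (-d) * (1 - u * v * w) ^ (-d) *
          hyp2F1 1 d (2 - d) (u * (1 - v * w) / (1 - u * v * w)))
      = (1 - d) * (1 / (4 - 5 * d) * (KK d).toReal) := by
    rw [← hit]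
    simp_rw [integral01]
    rw [← integral_const_mul]
    apply setIntegral_congr_fun measurableSet_Ioo
    intro u hu
    simp only
    rw [← integral_const_mul]
    apply setIntegral_congr_fun measurableSet_Ioo
    intro v hv
    simp only
    rw [← integral_const_mul]
    apply setIntegral_congr_fun measurableSet_Ioo
    intro w hw
    exact FF_toReal hd0 hd hu hv hw
  rw [hL, eq_sub_of_add_eq hKr]
  unfold ProbabilityTheory.beta
  have g1 := Real.Gamma_add_one hd'.ne'
  have g2 := Real.Gamma_add_one (s := 2 - 2 * d) (by linarith)
  have g3 := Real.Gamma_add_one h45.ne'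
  rw [show 1 - d + 1 = 2 - d by ring] at g1
  rw [show 2 - 2 * d + 1 = 3 - 2 * d by ring] at g2
  rw [show 4 - 5 * d + 1 = 5 - 5 * d by ring] at g3
  have p1 := Real.Gamma_pos_of_pos hd'
  have p2 := Real.Gamma_pos_of_pos (s := 2 - 2 * d) (by linarith)
  have p3 := Real.Gamma_pos_of_pos h45
  have p4 := Real.Gamma_pos_of_pos (s := 4 - 4 * d) (by linarith)
  rw [g1, g2, g3, show 1 - d + (1 - d) = 2 - 2 * d by ring,
    show 3 - 3 * d + (1 - d) = 4 - 4 * d by ring]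
  have h22 : 2 - 2 * d = 2 * (1 - d) := by ring
  generalize hyp3F2 1 d (2 - 2 * d) (2 - d) (3 - 2 * d) 1 = A
  generalize hyp4F3 1 d (2 - 2 * d) (3 - 3 * d) (2 - d) (3 - 2 * d) (4 - 4 * d) 1 = B
  generalize Real.Gamma (2 - 2 * d) = G2 at *
  generalize Real.Gamma (4 - 4 * d) = G4 at *
  generalize Real.Gamma (4 - 5 * d) = G5 at *
  generalize Real.Gamma (1 - d) = G1 at *
  generalize Real.Gamma (3 - 3 * d) = G3 at *
  rw [h22]
  field_simp
end

section
/- Let a, b, c be real numbers with a > 0, b > 0, a ≠ b, and c < 1. Then ₃F₂(a, b, c; a+1, b+1; 1) = [Γ(1-c)/(a-b)] · (a·Γ(b+1)/Γ(b-c+1) − b·Γ(a+1)/Γ(a-c+1)). -/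
open Real MeasureTheory

/-- coefficient of the binomial series -/
noncomputable def bco (c : ℝ) (k : ℕ) : ℝ := poch c k / (Nat.factorial k)

lemma bco_succ (c : ℝ) (k : ℕ) : bco c (k + 1) = bco c k * ((c + k) / (k + 1)) := by
  have : (Nat.factorial k : ℝ) ≠ 0 := by positivity
  have : (k + 1 : ℝ) ≠ 0 := by positivity
  simp only [bco, poch_succ, Nat.factorial_succ]
  push_cast
  field_simp

lemma bco_eq_choose (c : ℝ) (k : ℕ) : Ring.choose (c + k - 1) k = bco c k := by
  rw [← Ring.multichoose_eq]
  have h := Ring.factorial_nsmul_multichoose_eq_ascPochhammer c k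
  rw [Polynomial.ascPochhammer_smeval_eq_eval, nsmul_eq_mul] at h
  have : (Nat.factorial k : ℝ) ≠ 0 := by positivity
  rw [bco, poch, ← h]
  field_simp

lemma bco_hasSum (c : ℝ) {x : ℝ} (hx0 : 0 < x) (hx : x < 1) :
    HasSum (fun k => bco c k * x ^ k) ((1 - x) ^ (-c)) := by
  have h := (Real.one_div_one_sub_rpow_hasFPowerSeriesOnBall_zero c).hasSum (y := x)
    (by
      rw [Metric.mem_eball, edist_dist, dist_zero_right, Real.norm_of_nonneg hx0.le]
      simpa using hx)
  simp only [FormalMultilinearSeries.ofScalars_apply_eq, bco_eq_choose, zero_add,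
    smul_eq_mul] at h
  rwa [Real.rpow_neg (by linarith), ← one_div]

lemma bco_summable {c : ℝ} (hc : c < 1) {a : ℝ} (ha : 0 < a) :
    Summable (fun k : ℕ => |bco c k| * (1 / (a + k))) := by
  obtain ⟨N, hN⟩ := exists_nat_ge (-c)
  have key : Summable (fun k : ℕ => |bco c k| * (1 / (k + 1))) := by
    rw [← summable_nat_add_iff N]
    have hrec : ∀ k : ℕ, |bco c (k + N)| * (1 / (((k + N : ℕ) : ℝ) + 1)) =
        (1 - c)⁻¹ * (|bco c (k + N)| - |bco c (k + 1 + N)|) := by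
      intro k
      have e : k + 1 + N = (k + N) + 1 := by ring
      have hp : 0 ≤ c + ((k + N : ℕ) : ℝ) := by
        push_cast
        have : (0 : ℝ) ≤ k := by positivity
        linarith
      have hq : (0 : ℝ) < ((k + N : ℕ) : ℝ) + 1 := by positivity
      have hq' := hq.ne'
      have h1c : (1 - c) ≠ 0 := by linarith
      rw [e, bco_succ, abs_mul, abs_of_nonneg (div_nonneg hp hq.le)]
      field_simp
      ring
    refine summable_of_sum_range_le (c := (1 - c)⁻¹ * |bco c N|) (fun k => by positivity) ?_
    intro n
    rw [Finset.sum_congr rfl (fun k _ => hrec k), ← Finset.mul_sum,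
      Finset.sum_range_sub' (fun k => |bco c (k + N)|)]
    have : 0 < (1 - c)⁻¹ := inv_pos.2 (by linarith)
    apply mul_le_mul_of_nonneg_left _ this.le
    have := abs_nonneg (bco c (n + N))
    simp only [zero_add]
    linarith
  refine Summable.of_nonneg_of_le (fun k => by positivity) (fun k => ?_)
    (key.mul_left (1 / a + 1))
  have hk : (0 : ℝ) ≤ k := by positivity
  have : 1 / (a + k) ≤ (1 / a + 1) * (1 / (k + 1)) := by
    rw [div_le_iff₀ (by positivity)]
    have : (1 / a + 1) * (1 / (k + 1)) * (a + k) = (1 + a) * (a + k) / (a * (k + 1)) := by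
      field_simp
    rw [this, le_div_iff₀ (by positivity)]
    nlinarith [mul_nonneg ha.le hk]
  calc |bco c k| * (1 / (a + k)) ≤ |bco c k| * ((1 / a + 1) * (1 / (k + 1))) := by gcongr
    _ = _ := by ring

lemma beta_real {a v : ℝ} (ha : 0 < a) (hv : 0 < v) :
    ∫ x in Set.Ioo (0:ℝ) 1, x ^ (a - 1) * (1 - x) ^ (v - 1) =
      Real.Gamma a * Real.Gamma v / Real.Gamma (a + v) := by
  have h := Complex.betaIntegral_eq_Gamma_mul_div (a : ℂ) v (by simpa) (by simpa)
  rw [Complex.betaIntegral, intervalIntegral.integral_of_le zero_le_one,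
    integral_Ioc_eq_integral_Ioo] at h
  have e : ∫ x in Set.Ioo (0:ℝ) 1, (x : ℂ) ^ ((a:ℂ) - 1) * (1 - (x : ℂ)) ^ ((v:ℂ) - 1) =
      ∫ x in Set.Ioo (0:ℝ) 1, ((x ^ (a - 1) * (1 - x) ^ (v - 1) : ℝ) : ℂ) := by
    refine setIntegral_congr_fun measurableSet_Ioo fun x hx => ?_
    rw [Complex.ofReal_mul, Complex.ofReal_cpow hx.1.le, Complex.ofReal_cpow (by linarith [hx.2])]
    push_cast
    rfl
  rw [e, integral_complex_ofReal, ← Complex.ofReal_add, Complex.Gamma_ofReal,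
    Complex.Gamma_ofReal, Complex.Gamma_ofReal] at h
  exact_mod_cast h

lemma int_mono {a : ℝ} (ha : 0 < a) (k : ℕ) :
    IntegrableOn (fun x : ℝ => x ^ (a - 1 + k)) (Set.Ioo 0 1) ∧
    ∫ x in Set.Ioo (0:ℝ) 1, x ^ (a - 1 + k) = 1 / (a + k) := by
  have hk : (0 : ℝ) ≤ k := by positivity
  have hr : -1 < a - 1 + k := by linarith
  constructor
  · have := intervalIntegral.intervalIntegrable_rpow' (a := 0) (b := 1) hr
    rw [intervalIntegrable_iff_integrableOn_Ioo_of_le zero_le_one] at this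
    exact this
  · rw [← integral_Ioc_eq_integral_Ioo, ← intervalIntegral.integral_of_le zero_le_one,
      integral_rpow (Or.inl hr), Real.zero_rpow (by linarith), Real.one_rpow]
    ring_nf

lemma bco_beta {a c : ℝ} (ha : 0 < a) (hc : c < 1) :
    HasSum (fun k : ℕ => bco c k * (1 / (a + k)))
      (Real.Gamma a * Real.Gamma (1 - c) / Real.Gamma (a - c + 1)) := by
  have h := hasSum_integral_of_summable_integral_norm
    (μ := volume.restrict (Set.Ioo (0:ℝ) 1))
    (F := fun (k : ℕ) (x : ℝ) => bco c k * x ^ (a - 1 + k))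
    (fun k => (int_mono ha k).1.const_mul _) ?_
  · simp only [integral_const_mul, (int_mono ha _).2] at h
    suffices e : Real.Gamma a * Real.Gamma (1 - c) / Real.Gamma (a - c + 1) =
        ∫ x in Set.Ioo (0:ℝ) 1, ∑' i : ℕ, bco c i * x ^ (a - 1 + i) by
      rw [e]
      exact h
    rw [show a - c + 1 = a + (1 - c) by ring, ← beta_real ha (by linarith : 0 < 1 - c)]
    refine setIntegral_congr_fun measurableSet_Ioo fun x hx => ?_
    have hs := ((bco_hasSum c hx.1 hx.2).mul_left (x ^ (a - 1))).tsum_eq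
    rw [show 1 - c - 1 = -c by ring, ← hs]
    refine tsum_congr fun k => ?_
    rw [Real.rpow_add hx.1, Real.rpow_natCast]
    ring
  · convert bco_summable hc ha using 2 with k
    rw [← (int_mono ha k).2, ← integral_const_mul]
    refine setIntegral_congr_fun measurableSet_Ioo fun x hx => ?_
    rw [norm_mul, Real.norm_eq_abs, Real.norm_of_nonneg (Real.rpow_nonneg hx.1.le _)]

theorem hyp3F2_contiguous_eval (a b c : ℝ) (ha : 0 < a) (hb : 0 < b) (hab : a ≠ b)
    (hc : c < 1) :
    hyp3F2 a b c (a + 1) (b + 1) 1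
    = Real.Gamma (1 - c) / (a - b) *
        (a * Real.Gamma (b + 1) / Real.Gamma (b - c + 1)
          - b * Real.Gamma (a + 1) / Real.Gamma (a - c + 1)) := by
  have hs := (((bco_beta hb hc).sub (bco_beta ha hc)).mul_left (a * b / (a - b))).tsum_eq
  have hab' : a - b ≠ 0 := sub_ne_zero.2 hab
  rw [Real.Gamma_add_one ha.ne', Real.Gamma_add_one hb.ne', hyp3F2]
  trans a * b / (a - b) * (Real.Gamma b * Real.Gamma (1 - c) / Real.Gamma (b - c + 1) -
    Real.Gamma a * Real.Gamma (1 - c) / Real.Gamma (a - c + 1))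
  · rw [← hs]
    refine tsum_congr fun k => ?_
    have e : poch a k * poch b k * poch c k / (poch (a + 1) k * poch (b + 1) k) * 1 ^ k /
        (Nat.factorial k) = (poch a k / poch (a + 1) k) * (poch b k / poch (b + 1) k) * bco c k := by
      rw [bco, one_pow]
      ring
    rw [e, poch_ratio ha, poch_ratio hb]
    have h1 : a + k ≠ 0 := by positivity
    have h2 : b + k ≠ 0 := by positivity
    field_simp
    ring
  · ring
end
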